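/- arXiv:2001.06738 — 2 statements merged into one kernel-verified Lean document; each statement's English description precedes it below -/
import Mathlib

section
/- Let n be a positive integer with n ≡ 2 (mod 4). Define g on the unit circle S^1 ⊆ ℝ² by g(v) = 1 + cos(nθ), where θ is the polar angle of the unit vector v (equivalently, g(v) = 1 + Re((v_1 + i v_2)^n) for v = (v_1, v_2) ∈ S^1). Then g takes values in [0, 2], and g is a Gleason function of weight 2 for the ONBs for ℝ²: for every orthonormal basis {u, v} of ℝ², g(u) + g(v) = 2. -/
/-!
Identify `v ∈ ℝ²` with `z = v₁ + i v₂ ∈ ℂ`, which is an isometry. An orthonormal basis becomes a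
pair `z, w` with `w = ± i z`, hence `w ^ 2 = -z ^ 2`. As `n` is twice an odd number,
`w ^ n = -z ^ n`, and the two real parts cancel.
-/

open scoped ComplexConjugate

theorem pow_eq_neg_pow_of_sq_eq_neg_sq {M : Type*} [Monoid M] [HasDistribNeg M] {x y : M}
    (hsq : x ^ 2 = -y ^ 2) {n : ℕ} (hn : n % 4 = 2) : x ^ n = -y ^ n := by
  obtain ⟨m, rfl, hm⟩ : ∃ m, n = 2 * m ∧ Odd m :=
    ⟨n / 2, by lia, Nat.odd_iff.mpr (by lia)⟩
  rw [pow_mul, hsq, hm.neg_pow, ← pow_mul]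

theorem sq_eq_neg_sq_of_real_inner_eq_zero {z w : ℂ} (hnorm : ‖z‖ = ‖w‖)
    (horth : inner ℝ z w = 0) : w ^ 2 = -z ^ 2 := by
  rcases eq_or_ne z 0 with rfl | hz
  · have hw : w = 0 := norm_eq_zero.mp (by rw [← hnorm, norm_zero])
    simp [hw]
  have hadd : w * conj z + z * conj w = 0 := by
    have h := Complex.add_conj (w * conj z)
    rwa [← Complex.inner, horth, mul_zero, Complex.ofReal_zero, map_mul, Complex.conj_conj,
      mul_comm (conj w)] at h
  have hmul : w * conj w = z * conj z := by
    rw [Complex.mul_conj', Complex.mul_conj', hnorm]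
  refine mul_right_cancel₀ ((map_ne_zero conj).mpr hz) ?_
  linear_combination w * hadd - z * hmul

theorem one_add_re_pow_mem_Icc {z : ℂ} (hz : ‖z‖ ≤ 1) (n : ℕ) :
    1 + (z ^ n).re ∈ Set.Icc (0 : ℝ) 2 := by
  have hre : |(z ^ n).re| ≤ 1 := calc
    |(z ^ n).re| ≤ ‖z ^ n‖ := Complex.abs_re_le_norm _
    _ = ‖z‖ ^ n := norm_pow z n
    _ ≤ 1 := pow_le_one₀ (norm_nonneg z) hz
  obtain ⟨hlower, hupper⟩ := abs_le.mp hre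
  constructor <;> linarith

/-- For a positive integer `n ≡ 2 (mod 4)`, the function
`g(v) = 1 + cos(nθ) = 1 + Re((v₁ + i v₂)^n)` on the unit circle `S¹ ⊆ ℝ²`
takes values in `[0, 2]` and is a Gleason function of weight `2` for the ONBs of `ℝ²`. -/
theorem stmt_2 (n : ℕ) (hn : 0 < n) (hmod : n % 4 = 2)
    (g : EuclideanSpace ℝ (Fin 2) → ℝ)
    (hg : ∀ v : EuclideanSpace ℝ (Fin 2), ‖v‖ = 1 →
      g v = 1 + (((v 0 : ℂ) + (v 1 : ℂ) * Complex.I) ^ n).re) :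
    (∀ v : EuclideanSpace ℝ (Fin 2), ‖v‖ = 1 → 0 ≤ g v ∧ g v ≤ 2) ∧
    (∀ b : OrthonormalBasis (Fin 2) ℝ (EuclideanSpace ℝ (Fin 2)),
      g (b 0) + g (b 1) = 2) := by
  let e := Complex.orthonormalBasisOneI.repr.symm
  have hge : ∀ v, ‖v‖ = 1 → g v = 1 + (e v ^ n).re := fun v hv => by
    rw [hg v hv, Complex.orthonormalBasisOneI_repr_symm_apply]
  refine ⟨fun v hv => ?_, fun b => ?_⟩
  · rw [hge v hv]
    exact one_add_re_pow_mem_Icc (by rw [e.norm_map, hv]) n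
  · have hnorm : ‖e (b 0)‖ = ‖e (b 1)‖ := by simp only [e.norm_map, b.norm_eq_one]
    have horth : inner ℝ (e (b 0)) (e (b 1)) = 0 := by
      rw [e.inner_map_map, b.inner_eq_zero zero_ne_one]
    have hpow : e (b 1) ^ n = -e (b 0) ^ n :=
      pow_eq_neg_pow_of_sq_eq_neg_sq (sq_eq_neg_sq_of_real_inner_eq_zero hnorm horth) hmod
    rw [hge _ (b.norm_eq_one 0), hge _ (b.norm_eq_one 1), hpow, Complex.neg_re]
    ring
end

section
/- Let f : ℝ → ℝ be a bounded, non-negative, π/2-periodic function and let W ≥ sup f. Define g on the unit circle S^1 ⊆ ℝ² in the polar coordinate θ ∈ [0, 2π) by g(θ) = f(θ) if θ ∈ [0, π/2) ∪ [π, 3π/2), and g(θ) = W − f(θ) if θ ∈ [π/2, π) ∪ [3π/2, 2π). Then g is non-negative, and g is a Gleason function of weight W for the ONBs for ℝ²: for every orthonormal basis {u, v} of ℝ², g(u) + g(v) = W. -/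
/-!
Two orthogonal unit vectors of a plane differ by a quarter turn in one direction or the other, so
`g` is a Gleason function of weight `W` as soon as `g(θ) + g(θ + π/2) = W` for every polar angle
`θ`. A quarter turn exchanges the quadrants where `g = f` with those where `g = W - f`, and `f`
takes the same value at both angles by periodicity.
-/

open Function Real Set

/-- A Gleason function of weight `W`: its values sum to `W` over every orthonormal basis. The index
type `ι` of the bases is explicit, since it is not determined by the space. -/
def IsGleasonFunction (𝕜 : Type*) {E A : Type*} [RCLike 𝕜] [NormedAddCommGroup E]
    [InnerProductSpace 𝕜 E] [AddCommMonoid A] (ι : Type*) [Fintype ι] (g : E → A) (W : A) : Prop :=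
  ∀ b : OrthonormalBasis ι 𝕜 E, ∑ i, g (b i) = W

lemma eq_I_mul_or_eq_I_mul_of_inner_eq_zero {z w : ℂ} (hnorm : ‖z‖ = ‖w‖)
    (hinner : inner ℝ z w = 0) : w = Complex.I * z ∨ z = Complex.I * w := by
  have hident : Complex.normSq (w ^ 2 + z ^ 2) =
      (Complex.normSq w - Complex.normSq z) ^ 2 + 4 * inner ℝ z w ^ 2 := by
    simp only [Complex.inner, Complex.normSq_apply, Complex.mul_re, Complex.mul_im, sq,
      Complex.add_re, Complex.add_im, Complex.conj_re, Complex.conj_im]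
    ring
  have hsq : w ^ 2 + z ^ 2 = 0 := by
    rw [← Complex.normSq_eq_zero, hident, hinner, Complex.normSq_eq_norm_sq,
      Complex.normSq_eq_norm_sq, hnorm]
    ring
  have hprod : (w - Complex.I * z) * (w + Complex.I * z) = 0 := by
    linear_combination hsq - z ^ 2 * Complex.I_sq
  rcases mul_eq_zero.mp hprod with h | h
  · exact .inl (sub_eq_zero.mp h)
  · right
    rw [eq_neg_of_add_eq_zero_left h, mul_neg, ← mul_assoc, Complex.I_mul_I, neg_one_mul, neg_neg]

section PolarCoordinates

variable {F : Type*} [NormedAddCommGroup F] [InnerProductSpace ℝ F]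
  (e : OrthonormalBasis (Fin 2) ℝ F)

/-- The unit vector with polar coordinate `θ` in a plane with orthonormal basis `e`. -/
noncomputable def polarPoint (θ : ℝ) : F := cos θ • e 0 + sin θ • e 1

lemma isometryOfOrthonormal_exp_mul_I (θ : ℝ) :
    Complex.isometryOfOrthonormal e (Complex.exp (θ * Complex.I)) = polarPoint e θ := by
  simp [polarPoint, Complex.isometryOfOrthonormal_apply, Complex.exp_ofReal_mul_I_re,
    Complex.exp_ofReal_mul_I_im]

lemma isometryOfOrthonormal_I_mul_symm_polarPoint (θ : ℝ) :
    Complex.isometryOfOrthonormal e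
      (Complex.I * (Complex.isometryOfOrthonormal e).symm (polarPoint e θ)) =
      polarPoint e (θ + π / 2) := by
  rw [← isometryOfOrthonormal_exp_mul_I, ← isometryOfOrthonormal_exp_mul_I,
    LinearIsometryEquiv.symm_apply_apply]
  push_cast
  rw [add_mul, Complex.exp_add, Complex.exp_pi_div_two_mul_I, mul_comm]

lemma polarPoint_basisFun (θ : ℝ) :
    polarPoint (EuclideanSpace.basisFun (Fin 2) ℝ) θ =
      (EuclideanSpace.equiv (Fin 2) ℝ).symm ![cos θ, sin θ] := by
  ext i
  fin_cases i <;> simp [polarPoint]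

lemma polarPoint_periodic : Periodic (polarPoint e) (2 * π) := fun θ => by
  simp only [polarPoint, cos_add_two_pi, sin_add_two_pi]

lemma exists_polarPoint_eq {v : F} (hv : ‖v‖ = 1) : ∃ θ, polarPoint e θ = v := by
  have hz : ‖(Complex.isometryOfOrthonormal e).symm v‖ = 1 := by
    rwa [LinearIsometryEquiv.norm_map]
  obtain ⟨θ, hθ⟩ := (Complex.norm_eq_one_iff _).mp hz
  exact ⟨θ, by rw [← isometryOfOrthonormal_exp_mul_I, hθ, LinearIsometryEquiv.apply_symm_apply]⟩

lemma exists_eq_polarPoint_quarter_turn_or {u v : F} (hu : ‖u‖ = 1) (hv : ‖v‖ = 1)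
    (huv : inner ℝ u v = 0) :
    ∃ θ, (u = polarPoint e θ ∧ v = polarPoint e (θ + π / 2)) ∨
      (v = polarPoint e θ ∧ u = polarPoint e (θ + π / 2)) := by
  set φ := Complex.isometryOfOrthonormal e
  have hturn := eq_I_mul_or_eq_I_mul_of_inner_eq_zero (z := φ.symm u) (w := φ.symm v)
    (by simp only [LinearIsometryEquiv.norm_map, hu, hv])
    (by rwa [LinearIsometryEquiv.inner_map_map])
  rcases hturn with h | h
  · obtain ⟨θ, rfl⟩ := exists_polarPoint_eq e hu
    exact ⟨θ, .inl ⟨rfl, by rw [← isometryOfOrthonormal_I_mul_symm_polarPoint, ← h,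
      φ.apply_symm_apply]⟩⟩
  · obtain ⟨θ, rfl⟩ := exists_polarPoint_eq e hv
    exact ⟨θ, .inr ⟨rfl, by rw [← isometryOfOrthonormal_I_mul_symm_polarPoint, ← h,
      φ.apply_symm_apply]⟩⟩

lemma isGleasonFunction_of_polarPoint_add {A : Type*} [AddCommMonoid A] {g : F → A} {W : A}
    (hg : ∀ θ, g (polarPoint e θ) + g (polarPoint e (θ + π / 2)) = W) :
    IsGleasonFunction ℝ (Fin 2) g W := by
  intro b
  rw [Fin.sum_univ_two]
  obtain ⟨θ, ⟨h₀, h₁⟩ | ⟨h₁, h₀⟩⟩ := exists_eq_polarPoint_quarter_turn_or e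
    (b.norm_eq_one 0) (b.norm_eq_one 1) (b.inner_eq_zero zero_ne_one)
  · rw [h₀, h₁, hg]
  · rw [h₀, h₁, add_comm, hg]

end PolarCoordinates

section QuadrantProfile

variable {A : Type*} [AddCommGroup A] {f h : ℝ → A} {W : A} {θ : ℝ}

/-- The angular function on `[0, 2π)` that equals `f` on the first and third quadrants and `W - f`
on the other two. Its values outside `[0, 2π)` carry no meaning. -/
noncomputable def quadrantProfile (f : ℝ → A) (W : A) (θ : ℝ) : A :=
  if θ ∈ Ico 0 (π / 2) ∪ Ico π (3 * π / 2) then f θ else W - f θ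

lemma quadrantProfile_nonneg [PartialOrder A] [IsOrderedAddMonoid A] (hf : 0 ≤ f θ)
    (hW : f θ ≤ W) : 0 ≤ quadrantProfile f W θ := by
  unfold quadrantProfile
  split_ifs
  exacts [hf, sub_nonneg.mpr hW]

lemma quadrantProfile_add_of_mem_iff_notMem {θ' : ℝ} (hf : f θ' = f θ)
    (hquad : θ' ∈ Ico 0 (π / 2) ∪ Ico π (3 * π / 2) ↔
      θ ∉ Ico 0 (π / 2) ∪ Ico π (3 * π / 2)) :
    quadrantProfile f W θ + quadrantProfile f W θ' = W := by
  by_cases hθ : θ ∈ Ico 0 (π / 2) ∪ Ico π (3 * π / 2)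
  · simp only [quadrantProfile, hquad, hθ, hf, not_true, if_true, if_false, add_sub_cancel]
  · simp only [quadrantProfile, hquad, hθ, hf, not_false_iff, if_true, if_false, sub_add_cancel]

lemma quadrantProfile_add_quarter_turn (hf : Periodic f (π / 2)) (hθ : θ ∈ Ico 0 (3 * π / 2)) :
    quadrantProfile f W θ + quadrantProfile f W (θ + π / 2) = W := by
  refine quadrantProfile_add_of_mem_iff_notMem (hf θ) ?_
  simp only [mem_union, mem_Ico] at hθ ⊢
  grind

lemma quadrantProfile_add_quarter_turn_sub_two_pi (hf : Periodic f (π / 2))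
    (hθ : θ ∈ Ico (3 * π / 2) (2 * π)) :
    quadrantProfile f W θ + quadrantProfile f W (θ + π / 2 - 2 * π) = W := by
  have hfθ : f (θ + π / 2 - 2 * π) = f θ := by
    rw [show θ + π / 2 - 2 * π = θ - 3 * (π / 2) by ring]
    exact hf.sub_nat_mul_eq 3
  refine quadrantProfile_add_of_mem_iff_notMem hfθ ?_
  simp only [mem_union, mem_Ico] at hθ ⊢
  grind

lemma add_quarter_turn_of_eqOn_quadrantProfile (hf : Periodic f (π / 2))
    (hh : Periodic h (2 * π)) (hfh : EqOn h (quadrantProfile f W) (Ico 0 (2 * π))) (θ : ℝ) :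
    h θ + h (θ + π / 2) = W := by
  have hsum : Periodic (fun t => h t + h (t + π / 2)) (2 * π) := hh.add (hh.add_const _)
  obtain ⟨t, ht, hθt⟩ := hsum.exists_mem_Ico₀ two_pi_pos θ
  rw [hθt, hfh ht]
  rcases lt_or_ge t (3 * π / 2) with hlt | hge
  · rw [hfh ⟨by linarith [ht.1, pi_pos], by linarith⟩]
    exact quadrantProfile_add_quarter_turn hf ⟨ht.1, hlt⟩
  · rw [← hh.sub_eq, hfh ⟨by linarith, by linarith [ht.2, pi_pos]⟩]
    exact quadrantProfile_add_quarter_turn_sub_two_pi hf ⟨hge, ht.2⟩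

end QuadrantProfile

theorem stmt_5_general {F A : Type*} [NormedAddCommGroup F] [InnerProductSpace ℝ F]
    [AddCommGroup A] [PartialOrder A] [IsOrderedAddMonoid A] (e : OrthonormalBasis (Fin 2) ℝ F)
    {f : ℝ → A} {W : A} {g : F → A} (hf_nonneg : ∀ t, 0 ≤ f t) (hf_per : Periodic f (π / 2))
    (hW : ∀ t, f t ≤ W)
    (hg : EqOn (g ∘ polarPoint e) (quadrantProfile f W) (Ico 0 (2 * π))) :
    (∀ v, ‖v‖ = 1 → 0 ≤ g v) ∧ IsGleasonFunction ℝ (Fin 2) g W := by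
  have hper : Periodic (g ∘ polarPoint e) (2 * π) := (polarPoint_periodic e).comp g
  refine ⟨fun v hv => ?_, isGleasonFunction_of_polarPoint_add e
    (add_quarter_turn_of_eqOn_quadrantProfile hf_per hper hg)⟩
  obtain ⟨θ, rfl⟩ := exists_polarPoint_eq e hv
  obtain ⟨t, ht, hθt⟩ := hper.exists_mem_Ico₀ two_pi_pos θ
  calc 0 ≤ quadrantProfile f W t := quadrantProfile_nonneg (hf_nonneg t) (hW t)
    _ = g (polarPoint e θ) := (hθt.trans (hg ht)).symm

/-- Let `f : ℝ → ℝ` be bounded, non-negative, and `π/2`-periodic, and let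
`W ≥ sup f`.  Define `g` on the unit circle in polar coordinates `θ ∈ [0, 2π)` by
`g(θ) = f(θ)` for `θ ∈ [0, π/2) ∪ [π, 3π/2)` and `g(θ) = W - f(θ)` for
`θ ∈ [π/2, π) ∪ [3π/2, 2π)`.  Then `g` is non-negative on `S¹` and is a Gleason
function of weight `W` for the ONBs of `ℝ²`. -/
theorem stmt_5 (f : ℝ → ℝ) (hf_nonneg : ∀ t, 0 ≤ f t)
    (hf_bdd : ∃ C : ℝ, ∀ t, f t ≤ C)
    (hf_per : ∀ t, f (t + Real.pi / 2) = f t)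
    (W : ℝ) (hW : ∀ t, f t ≤ W)
    (g : EuclideanSpace ℝ (Fin 2) → ℝ)
    (hg : ∀ θ ∈ Set.Ico (0 : ℝ) (2 * Real.pi),
      g ((EuclideanSpace.equiv (Fin 2) ℝ).symm ![Real.cos θ, Real.sin θ]) =
        if θ ∈ Set.Ico (0 : ℝ) (Real.pi / 2) ∪ Set.Ico Real.pi (3 * Real.pi / 2)
        then f θ else W - f θ) :
    (∀ v : EuclideanSpace ℝ (Fin 2), ‖v‖ = 1 → 0 ≤ g v) ∧
    (∀ b : OrthonormalBasis (Fin 2) ℝ (EuclideanSpace ℝ (Fin 2)),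
      g (b 0) + g (b 1) = W) := by
  have hg' : EqOn (g ∘ polarPoint (EuclideanSpace.basisFun (Fin 2) ℝ)) (quadrantProfile f W)
      (Ico 0 (2 * π)) := fun θ hθ => by rw [comp_apply, polarPoint_basisFun]; exact hg θ hθ
  simpa only [IsGleasonFunction, Fin.sum_univ_two] using
    stmt_5_general _ hf_nonneg hf_per hW hg'
end
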